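/- Let u ≤ w in S_n and suppose (u(i),u(j)) ∈ E_w(u)^+ and (u(i'),u(j')) ∈ E_w(u)^+ with 1 ≤ i < j ≤ n and 1 ≤ i' < j' ≤ n. If i < i' < j and u(i) > u(i'), then u(i) > u(j') in case j' < j, and u(j) > u(j') in case j < j'. -/

import Mathlib

open Equiv

/-- The length (number of inversions) of a permutation of `Fin n`. -/
def invLen {n : ℕ} (u : Equiv.Perm (Fin n)) : ℕ :=
  (Finset.univ.filter (fun p : Fin n × Fin n => p.1 < p.2 ∧ u p.2 < u p.1)).card

/-- A permutation is a transposition if it swaps two distinct elements. -/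
def IsTransposition {n : ℕ} (σ : Equiv.Perm (Fin n)) : Prop :=
  ∃ a b : Fin n, a ≠ b ∧ σ = Equiv.swap a b

/-- Bruhat order on permutations: `v ≤ w` iff `w` is obtained from `v` by left
multiplication by transpositions, each strictly increasing the length. -/
def BruhatLE {n : ℕ} (v w : Equiv.Perm (Fin n)) : Prop :=
  ∃ (m : ℕ) (c : ℕ → Equiv.Perm (Fin n)),
    c 0 = v ∧ c m = w ∧
    ∀ k, k < m →
      (∃ τ : Equiv.Perm (Fin n), IsTransposition τ ∧ c (k + 1) = τ * c k) ∧
      invLen (c k) < invLen (c (k + 1))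

/-- The edge set `Ẽ_w(u)`. -/
def Etilde {n : ℕ} (w u : Equiv.Perm (Fin n)) : Set (Fin n × Fin n) :=
  { p | ∃ i j : Fin n, i < j ∧ p = (u i, u j) ∧
      BruhatLE (Equiv.swap (u i) (u j) * u) w ∧
      |(invLen (Equiv.swap (u i) (u j) * u) : ℤ) - (invLen u : ℤ)| = 1 }

/-- The transitive reduction `E_w(u)` of `Ẽ_w(u)`: edges `(a,b)` of `Ẽ_w(u)` such that
there is no directed path from `a` to `b` in `Ẽ_w(u)` using at least two edges. -/
def Ered {n : ℕ} (w u : Equiv.Perm (Fin n)) : Set (Fin n × Fin n) :=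
  { p | p ∈ Etilde w u ∧
      ¬ ∃ c : Fin n, (p.1, c) ∈ Etilde w u ∧
        Relation.TransGen (fun a b : Fin n => (a, b) ∈ Etilde w u) c p.2 }

/-- `E_w(u)^+`: edges `(a,b)` of `E_w(u)` with `a < b`. -/
def Eplus {n : ℕ} (w u : Equiv.Perm (Fin n)) : Set (Fin n × Fin n) :=
  { p ∈ Ered w u | p.1 < p.2 }

/-- `E_w(u)^-`: edges `(a,b)` of `E_w(u)` with `a > b`. -/
def Eminus {n : ℕ} (w u : Equiv.Perm (Fin n)) : Set (Fin n × Fin n) :=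
  { p ∈ Ered w u | p.2 < p.1 }

/-- The moment-map image `μ(u) = (u⁻¹(1), …, u⁻¹(n)) ∈ ℝⁿ`
(using values `1, …, n`, i.e. `Fin.val + 1`). -/
def mu {n : ℕ} (u : Equiv.Perm (Fin n)) : Fin n → ℝ :=
  fun k => ((u⁻¹ k : ℕ) : ℝ) + 1

/-- The standard basis vector `e_a` of `ℝⁿ`. -/
def stdB {n : ℕ} (a : Fin n) : Fin n → ℝ :=
  fun k => if k = a then 1 else 0


/-- The value of a permutation after exchanging two values. -/
theorem swap_mul_val {n : ℕ} (u : Equiv.Perm (Fin n)) (i j k : Fin n) :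
    (Equiv.swap (u i) (u j) * u) k = if k = i then u j else if k = j then u i else u k := by
  rw [← Equiv.mul_swap_eq_swap_mul, Equiv.Perm.mul_apply, Equiv.swap_apply_def]
  split_ifs <;> rfl

/-- The set of inversions. -/
def invSet {n : ℕ} (u : Equiv.Perm (Fin n)) : Finset (Fin n × Fin n) :=
  Finset.univ.filter (fun p : Fin n × Fin n => p.1 < p.2 ∧ u p.2 < u p.1)

/-- The involution on pairs of positions. -/
def pairMap {n : ℕ} (i j : Fin n) (p : Fin n × Fin n) : Fin n × Fin n :=
  if Equiv.swap i j p.1 < Equiv.swap i j p.2 then (Equiv.swap i j p.1, Equiv.swap i j p.2) else p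

theorem mem_invSet {n : ℕ} (u : Equiv.Perm (Fin n)) (p : Fin n × Fin n) :
    p ∈ invSet u ↔ p.1 < p.2 ∧ u p.2 < u p.1 := by
  simp [invSet]

theorem pairMap_invol {n : ℕ} (i j : Fin n) (p : Fin n × Fin n) (hp : p.1 < p.2) :
    pairMap i j (pairMap i j p) = p := by
  unfold pairMap
  split_ifs <;> simp_all

theorem pairMap_injOn {n : ℕ} (i j : Fin n) (u : Equiv.Perm (Fin n)) :
    Set.InjOn (pairMap i j) (invSet u : Set (Fin n × Fin n)) := by
  intro p hp q hq h
  have hp' := (mem_invSet u p).1 hp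
  have hq' := (mem_invSet u q).1 hq
  rw [← pairMap_invol i j p hp'.1, h, pairMap_invol i j q hq'.1]

theorem pairMap_mem {n : ℕ} (i j : Fin n) (u : Equiv.Perm (Fin n)) (hij : i < j)
    (hu : u i < u j) (p : Fin n × Fin n) (hp : p ∈ invSet u) :
    pairMap i j p ∈ invSet (Equiv.swap (u i) (u j) * u) := by
  obtain ⟨p, q⟩ := p
  rw [mem_invSet] at hp ⊢
  simp only [swap_mul_val]
  simp only [pairMap, Equiv.swap_apply_def] at *
  grind

theorem not_mem_image {n : ℕ} (i j : Fin n) (u : Equiv.Perm (Fin n)) (hij : i < j)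
    (k : Fin n) (hk : i < k) (hkj : k ≤ j) (hu : u i < u k) :
    (i, k) ∉ (invSet u).image (pairMap i j) := by
  intro h
  obtain ⟨⟨p, q⟩, hp, h⟩ := Finset.mem_image.1 h
  rw [mem_invSet] at hp
  simp only [pairMap, Equiv.swap_apply_def] at *
  grind

theorem len_between {n : ℕ} (u : Equiv.Perm (Fin n)) (i j k : Fin n) (hik : i < k) (hkj : k < j)
    (h1 : u i < u k) (h2 : u k < u j) :
    invLen u + 2 ≤ invLen (Equiv.swap (u i) (u j) * u) := by
  have hij := hik.trans hkj
  have hu := h1.trans h2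
  have hsub : insert (i, j) (insert (i, k) ((invSet u).image (pairMap i j))) ⊆
      invSet (Equiv.swap (u i) (u j) * u) := by
    intro p hp
    rw [Finset.mem_insert, Finset.mem_insert, Finset.mem_image] at hp
    rcases hp with rfl | rfl | ⟨q, hq, rfl⟩
    · rw [mem_invSet]; simp only [swap_mul_val]; grind
    · rw [mem_invSet]; simp only [swap_mul_val]; grind
    · exact pairMap_mem i j u hij hu q hq
  have hc := Finset.card_le_card hsub
  have hn1 := not_mem_image i j u hij k hik hkj.le h1
  have hn2 := not_mem_image i j u hij j hij le_rfl hu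
  rw [Finset.card_insert_of_notMem, Finset.card_insert_of_notMem hn1,
    Finset.card_image_of_injOn (pairMap_injOn i j u)] at hc
  · exact hc
  · rw [Finset.mem_insert]
    rintro (h | h)
    · simp at h; omega
    · exact hn2 h

theorem len_cover {n : ℕ} (u : Equiv.Perm (Fin n)) (i j : Fin n) (hij : i < j) (hu : u i < u j)
    (hno : ∀ k, i < k → k < j → u i < u k → u k < u j → False) :
    invLen (Equiv.swap (u i) (u j) * u) = invLen u + 1 := by
  have heq : invSet (Equiv.swap (u i) (u j) * u) =
      insert (i, j) ((invSet u).image (pairMap i j)) := by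
    ext p
    rw [Finset.mem_insert, Finset.mem_image]
    constructor
    · intro hp
      by_cases hpe : p = (i, j)
      · exact Or.inl hpe
      right
      have hp' := (mem_invSet _ p).1 hp
      refine ⟨pairMap i j p, ?_, pairMap_invol i j p hp'.1⟩
      obtain ⟨p, q⟩ := p
      rw [mem_invSet]
      simp only [swap_mul_val] at hp'
      have inj : ∀ x y, u x = u y → x = y := fun x y h => u.injective h
      have hnp := hno p
      have hnq := hno q
      have i1 := inj p j
      have i2 := inj q i
      simp only [pairMap, Equiv.swap_apply_def] at *
      clear inj hno hp
      grind
    · rintro (rfl | ⟨q, hq, rfl⟩)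
      · rw [mem_invSet]; simp only [swap_mul_val]; grind
      · exact pairMap_mem i j u hij hu q hq
  have hn2 := not_mem_image i j u hij j hij le_rfl hu
  change (invSet _).card = (invSet u).card + 1
  rw [heq, Finset.card_insert_of_notMem hn2, Finset.card_image_of_injOn (pairMap_injOn i j u)]

theorem bruhat_cons {n : ℕ} (v u w : Equiv.Perm (Fin n)) (τ : Equiv.Perm (Fin n))
    (hτ : IsTransposition τ) (huv : u = τ * v) (hlen : invLen v < invLen u)
    (h : BruhatLE u w) : BruhatLE v w := by
  obtain ⟨m, c, h0, hm, hc⟩ := h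
  refine ⟨m + 1, fun k => Nat.casesOn k v c, rfl, hm, ?_⟩
  intro k hk
  cases k with
  | zero =>
    change (∃ τ, IsTransposition τ ∧ c 0 = τ * v) ∧ invLen v < invLen (c 0)
    rw [h0]
    exact ⟨⟨τ, hτ, huv⟩, hlen⟩
  | succ k => exact hc k (by omega)

theorem down_edge {n : ℕ} (w u : Equiv.Perm (Fin n)) (hle : BruhatLE u w) (i j : Fin n)
    (hij : i < j) (hu : u j < u i)
    (hno : ∀ k, i < k → k < j → u j < u k → u k < u i → False) :
    (u i, u j) ∈ Etilde w u := by
  set v := Equiv.swap (u i) (u j) * u with hv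
  have hval : ∀ k, v k = if k = i then u j else if k = j then u i else u k :=
    fun k => swap_mul_val u i j k
  have hvi : v i = u j := by simp [hval]
  have hvj : v j = u i := by rw [hval, if_neg hij.ne', if_pos rfl]
  have huv : Equiv.swap (v i) (v j) * v = u := by
    rw [hvi, hvj, Equiv.swap_comm, hv, Equiv.swap_mul_self_mul]
  have hlen := len_cover v i j hij (by rw [hvi, hvj]; exact hu) (by
    intro k h1 h2 h3 h4
    have hk : v k = u k := by rw [hval, if_neg h1.ne', if_neg h2.ne]
    rw [hvi, hk] at h3
    rw [hvj, hk] at h4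
    exact hno k h1 h2 h3 h4)
  rw [huv] at hlen
  refine ⟨i, j, hij, rfl, ?_, ?_⟩
  · exact bruhat_cons v u w (Equiv.swap (v i) (v j))
      ⟨v i, v j, by rw [hvi, hvj]; exact hu.ne, rfl⟩ huv.symm (by omega) hle
  · rw [← hv, hlen]
    push_cast
    norm_num

theorem down_path {n : ℕ} (w u : Equiv.Perm (Fin n)) (hle : BruhatLE u w) :
    ∀ (d : ℕ) (i j : Fin n), (j : ℕ) - (i : ℕ) ≤ d → i < j → u j < u i →
      Relation.TransGen (fun a b : Fin n => (a, b) ∈ Etilde w u) (u i) (u j) := by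
  intro d
  induction d with
  | zero => intro i j h hij; omega
  | succ d ih =>
    intro i j h hij hu
    by_cases hno : ∀ k, i < k → k < j → u j < u k → u k < u i → False
    · exact Relation.TransGen.single (down_edge w u hle i j hij hu hno)
    · push Not at hno
      obtain ⟨k, h1, h2, h3, h4, -⟩ := hno
      exact (ih i k (by omega) h1 h4).trans (ih k j (by omega) h2 h3)

theorem up_edge_cover {n : ℕ} (w u : Equiv.Perm (Fin n)) (i j : Fin n)
    (h : (u i, u j) ∈ Etilde w u) (k : Fin n)
    (hik : i < k) (hkj : k < j) (h1 : u i < u k) (h2 : u k < u j) : False := by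
  obtain ⟨i', j', -, he, -, hlen⟩ := h
  have := len_between u i j k hik hkj h1 h2
  rw [Prod.mk.injEq] at he
  rw [← he.1, ← he.2, abs_eq (by norm_num)] at hlen
  omega

theorem stmt8 {n : ℕ} (hn : 1 ≤ n) (w u : Equiv.Perm (Fin n)) (hle : BruhatLE u w)
    (i j i' j' : Fin n) (hij : i < j) (hi'j' : i' < j')
    (h1 : ((u i, u j) : Fin n × Fin n) ∈ Eplus w u)
    (h2 : ((u i', u j') : Fin n × Fin n) ∈ Eplus w u)
    (h3 : i < i') (h4 : i' < j) (h5 : u i' < u i) :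
    (j' < j → u j' < u i) ∧ (j < j' → u j' < u j) := by
  obtain ⟨⟨e1, r1⟩, l1⟩ := h1
  obtain ⟨⟨e2, -⟩, -⟩ := h2
  simp only at r1 l1
  constructor
  · intro hj
    by_contra hcon
    have hne1 : u i ≠ u j' := fun h => (h3.trans hi'j').ne (u.injective h)
    have hlt : u i < u j' := lt_of_le_of_ne (not_lt.1 hcon) hne1
    have hne2 : u j ≠ u j' := fun h => hj.ne' (u.injective h)
    have hgt : u j < u j' := by
      refine lt_of_le_of_ne (not_lt.1 fun h => ?_) hne2
      exact up_edge_cover w u i j e1 j' (h3.trans hi'j') hj hlt h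
    have p1 := down_path w u hle _ i i' le_rfl h3 h5
    have p2 := down_path w u hle _ j' j le_rfl hj hgt
    have p3 := Relation.TransGen.head e2 p2
    obtain ⟨c, hc, hcp⟩ := Relation.TransGen.head'_iff.1 p1
    exact r1 ⟨c, hc, Relation.TransGen.trans_right hcp p3⟩
  · intro hj
    by_contra hcon
    have hne : u j ≠ u j' := fun h => hj.ne (u.injective h)
    exact up_edge_cover w u i' j' e2 j h4 hj (h5.trans l1)
      (lt_of_le_of_ne (not_lt.1 hcon) hne)
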